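/- arXiv:2304.14169 — 2 statements merged into one kernel-verified Lean document; each statement's English description precedes it below -/
import Mathlib

section
/- For every m ∈ ℕ and every f ∈ F_d^log, the Fourier partial sum over the cube Λ = [-m, m]^d ∩ ℤ^d satisfies the uniform bound ‖f − P_Λ f‖_∞ ≤ 1/log(m+1); consequently, for every ε > 0, N^∞(ε, F_d^log) ≤ exp(2 d ε^{-1}), i.e., there is a finite index set Λ ⊂ ℤ^d with #Λ ≤ exp(2 d ε^{-1}) and sup_{f∈F_d^log} ‖f − P_Λ f‖_∞ ≤ ε. -/
open MeasureTheory Real Finset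

noncomputable section

/-- The unit cube `[0,1]^d`. -/
def cube (d : ℕ) : Set (Fin d → ℝ) := Set.univ.pi fun _ => Set.Icc 0 1

/-- The trigonometric character `e^{2πi⟨k,x⟩}`. -/
def eK (d : ℕ) (k : Fin d → ℤ) (x : Fin d → ℝ) : ℂ :=
  Complex.exp (2 * Real.pi * Complex.I * ∑ i, (k i : ℂ) * (x i : ℂ))

/-- The Fourier coefficient `f̂(k) = ∫_{[0,1]^d} f(x) e^{-2πi⟨k,x⟩} dx`. -/
def fCoeff (d : ℕ) (f : (Fin d → ℝ) → ℂ) (k : Fin d → ℤ) : ℂ :=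
  ∫ x in cube d, f x * Complex.exp (-(2 * Real.pi * Complex.I) * ∑ i, (k i : ℂ) * (x i : ℂ))

/-- `f` is 1-periodic in each coordinate. -/
def Periodic1 (d : ℕ) (f : (Fin d → ℝ) → ℂ) : Prop :=
  ∀ (x : Fin d → ℝ) (i : Fin d), f (Function.update x i (x i + 1)) = f x

/-- The weight `max(1, log ‖k‖_∞)`. -/
def logWeight (d : ℕ) (k : Fin d → ℤ) : ℝ :=
  max 1 (Real.log ((Finset.univ.sup fun i => (k i).natAbs : ℕ) : ℝ))

/-- The class `F_d^log` of continuous 1-periodic functions with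
`∑_k |f̂(k)| max(1, log ‖k‖_∞) ≤ 1`. -/
def FdLog (d : ℕ) : Set ((Fin d → ℝ) → ℂ) :=
  {f | Continuous f ∧ Periodic1 d f ∧
    Summable (fun k : Fin d → ℤ => ‖fCoeff d f k‖ * logWeight d k) ∧
    ∑' k : Fin d → ℤ, ‖fCoeff d f k‖ * logWeight d k ≤ 1}

/-- The cube of frequencies `[-m, m]^d ∩ ℤ^d`. -/
def boxZ (d m : ℕ) : Finset (Fin d → ℤ) :=
  Fintype.piFinset fun _ : Fin d => Finset.Icc (-(m : ℤ)) m


lemma periodic_piecewise (d : ℕ) (f : (Fin d → ℝ) → ℂ) (hf : Periodic1 d f)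
    (x y : Fin d → ℝ) (h : ∀ i, ∃ n : ℤ, y i = x i + n) : f y = f x := by
  have key : ∀ (z : Fin d → ℝ) (i : Fin d) (n : ℤ), f (Function.update z i (z i + n)) = f z := by
    intro z i n
    have hp : Function.Periodic (fun t => f (Function.update z i t)) 1 := by
      intro t
      have := hf (Function.update z i t) i
      simpa using this
    have := hp.int_mul n (z i)
    simpa using this
  have : ∀ s : Finset (Fin d), f (s.piecewise y x) = f x := by
    intro s
    induction s using Finset.induction_on with
    | empty => simp
    | insert j s hj ih =>
      obtain ⟨n, hn⟩ := h j
      rw [Finset.piecewise_insert, hn, ← ih, ← key (s.piecewise y x) j n]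
      simp [hj]
  simpa using this Finset.univ

/-- The covering map onto the torus. -/
def toTorus (d : ℕ) (x : Fin d → ℝ) : UnitAddTorus (Fin d) := fun i => (x i : UnitAddCircle)

lemma toTorus_quot (d : ℕ) : IsOpenQuotientMap (toTorus d) :=
  IsOpenQuotientMap.piMap (fun _ => QuotientAddGroup.isOpenQuotientMap_mk)

lemma exists_lift (d : ℕ) (f : (Fin d → ℝ) → ℂ) (hc : Continuous f) (hf : Periodic1 d f) :
    ∃ g : C(UnitAddTorus (Fin d), ℂ), ∀ x, g (toTorus d x) = f x := by
  let g : UnitAddTorus (Fin d) → ℂ := fun y => f (Function.surjInv (toTorus_quot d).surjective y)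
  have hg : ∀ x, g (toTorus d x) = f x := by
    intro x
    apply periodic_piecewise d f hf
    intro i
    have := congrFun (Function.surjInv_eq (toTorus_quot d).surjective (toTorus d x)) i
    obtain ⟨n, hn⟩ := AddSubgroup.mem_zmultiples_iff.1 (QuotientAddGroup.eq.1 this.symm)
    refine ⟨n, ?_⟩
    simp only [zsmul_eq_mul, mul_one] at hn
    linarith
  refine ⟨⟨g, ?_⟩, hg⟩
  rw [← (toTorus_quot d).continuous_comp_iff]
  exact hc.congr fun x => (hg x).symm

lemma mFourier_toTorus (d : ℕ) (k : Fin d → ℤ) (x : Fin d → ℝ) :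
    UnitAddTorus.mFourier k (toTorus d x) = eK d k x := by
  simp only [UnitAddTorus.mFourier, toTorus, ContinuousMap.coe_mk, fourier_coe_apply, eK,
    ← Complex.exp_sum, Finset.mul_sum]
  congr 1
  refine Finset.sum_congr rfl fun i _ => ?_
  simp
  ring

lemma norm_eK (d : ℕ) (k : Fin d → ℤ) (x : Fin d → ℝ) : ‖eK d k x‖ = 1 := by
  rw [← mFourier_toTorus]
  simp only [UnitAddTorus.mFourier, ContinuousMap.coe_mk, fourier_apply, norm_prod,
    Circle.norm_coe, Finset.prod_const_one]

lemma coeff_eq (d : ℕ) (f : (Fin d → ℝ) → ℂ) (g : C(UnitAddTorus (Fin d), ℂ))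
    (hg : ∀ x, g (toTorus d x) = f x) (k : Fin d → ℤ) :
    UnitAddTorus.mFourierCoeff g k = fCoeff d f k := by
  rw [UnitAddTorus.mFourierCoeff_eq_integral g k (fun _ => 0), fCoeff]
  have hs : {x : Fin d → ℝ | ∀ i, x i ∈ Set.Ioc (0:ℝ) (0 + 1)} =ᵐ[volume] cube d := by
    have := Measure.pi_Ioc_ae_eq_pi_Icc (μ := fun _ : Fin d => (volume : Measure ℝ))
      (s := Set.univ) (f := fun _ => 0) (g := fun _ => 1)
    have he : {x : Fin d → ℝ | ∀ i, x i ∈ Set.Ioc (0:ℝ) (0 + 1)} =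
        Set.univ.pi fun _ => Set.Ioc 0 1 := by
      ext x
      simp [Set.mem_pi]
    rw [he]
    exact this
  rw [setIntegral_congr_set hs]
  congr 1
  ext x
  have h1 := mFourier_toTorus d (-k) x
  have h2 := hg x
  unfold toTorus at h1 h2
  rw [h1, h2, smul_eq_mul, mul_comm, eK]
  congr 2
  simp [Finset.sum_neg_distrib]

lemma err_bound (d : ℕ) (f : (Fin d → ℝ) → ℂ) (hf : f ∈ FdLog d) (s : Finset (Fin d → ℤ))
    (c : ℝ) (hc : 0 < c) (hs : ∀ k, k ∉ s → c ≤ logWeight d k) (x : Fin d → ℝ) :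
    ‖f x - ∑ k ∈ s, fCoeff d f k * eK d k x‖ ≤ 1 / c := by
  obtain ⟨hcont, hper, hsum, hle⟩ := hf
  have hw : ∀ k, 1 ≤ logWeight d k := fun k => le_max_left _ _
  have hsn : Summable (fun k => ‖fCoeff d f k‖) :=
    Summable.of_nonneg_of_le (fun _ => norm_nonneg _)
      (fun k => le_mul_of_one_le_right (norm_nonneg _) (hw k)) hsum
  obtain ⟨g, hg⟩ := exists_lift d f hcont hper
  have hco : UnitAddTorus.mFourierCoeff g = fCoeff d f := funext (coeff_eq d f g hg)
  have hS := UnitAddTorus.hasSum_mFourier_series_apply_of_summable (f := g)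
    (by rw [hco]; exact hsn.of_norm) (toTorus d x)
  simp only [hco, hg, mFourier_toTorus, smul_eq_mul] at hS
  have hfin := hasSum_sum_of_ne_finset_zero (L := SummationFilter.unconditional _) (s := s)
    (f := fun k => if k ∈ s then fCoeff d f k * eK d k x else 0) (fun k hk => if_neg hk)
  rw [Finset.sum_congr rfl (fun k hk => if_pos hk)] at hfin
  have hd := hS.sub hfin
  rw [← hd.tsum_eq]
  have hb : HasSum (fun k => ‖fCoeff d f k‖ * logWeight d k / c)
      ((∑' k, ‖fCoeff d f k‖ * logWeight d k) / c) := hsum.hasSum.div_const c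
  refine (tsum_of_norm_bounded hb fun k => ?_).trans (by gcongr)
  have h0 : 0 ≤ logWeight d k := zero_le_one.trans (hw k)
  by_cases hk : k ∈ s
  · simp only [hk, if_true, sub_self, norm_zero]; positivity
  · simp only [hk, if_false, sub_zero, norm_mul, norm_eK, mul_one]
    rw [le_div_iff₀ hc]
    exact mul_le_mul_of_nonneg_left (hs k hk) (norm_nonneg _)

lemma le_logWeight (d m : ℕ) (k : Fin d → ℤ) (hk : k ∉ boxZ d m) :
    Real.log ((m:ℝ) + 1) ≤ logWeight d k := by
  simp only [boxZ, Fintype.mem_piFinset, not_forall, Finset.mem_Icc] at hk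
  obtain ⟨i, hi⟩ := hk
  have h1 : m + 1 ≤ (k i).natAbs := by omega
  have h2 := h1.trans (Finset.le_sup (f := fun i => (k i).natAbs) (Finset.mem_univ i))
  refine le_trans ?_ (le_max_right _ _)
  apply Real.log_le_log (by positivity)
  exact_mod_cast h2

/-- for every `m ≥ 1` and every `f ∈ F_d^log`, the Fourier partial sum
over `Λ = [-m,m]^d` satisfies `‖f − P_Λ f‖_∞ ≤ 1/log(m+1)`; consequently, for every
`ε > 0` there is a finite `Λ ⊂ ℤ^d` with `#Λ ≤ exp(2dε⁻¹)` and
`sup_{f ∈ F_d^log} ‖f − P_Λ f‖_∞ ≤ ε`. -/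
theorem statement5 :
    (∀ (d m : ℕ), 1 ≤ m → ∀ f ∈ FdLog d, ∀ x : Fin d → ℝ,
      ‖f x - ∑ k ∈ boxZ d m, fCoeff d f k * eK d k x‖ ≤ 1 / Real.log ((m : ℝ) + 1)) ∧
    (∀ (d : ℕ) (ε : ℝ), 1 ≤ d → 0 < ε →
      ∃ Λ : Finset (Fin d → ℤ), (Λ.card : ℝ) ≤ Real.exp (2 * d * ε⁻¹) ∧
        ∀ f ∈ FdLog d, ∀ x : Fin d → ℝ,
          ‖f x - ∑ k ∈ Λ, fCoeff d f k * eK d k x‖ ≤ ε) := by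
  refine ⟨?_, ?_⟩
  · intro d m hm f hf x
    have hm' : (1:ℝ) ≤ m := by exact_mod_cast hm
    have hlog : 0 < Real.log ((m:ℝ)+1) := Real.log_pos (by linarith)
    exact err_bound d f hf _ _ hlog (fun k hk => le_logWeight d m k hk) x
  · intro d ε hd hε
    by_cases h1 : 1 ≤ ε
    · refine ⟨∅, ?_, ?_⟩
      · simp only [Finset.card_empty, Nat.cast_zero]; positivity
      · intro f hf x
        refine (err_bound d f hf ∅ 1 one_pos (fun k _ => le_max_left _ _) x).trans ?_
        simpa using h1
    · push Not at h1
      set t := ε⁻¹ with ht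
      have ht1 : 1 < t := (one_lt_inv₀ hε).2 h1
      have he : 2.5 < Real.exp t := by
        have := Real.exp_one_gt_d9
        have := Real.exp_lt_exp.2 ht1
        linarith
      obtain ⟨m, hm⟩ : ∃ m, ⌈Real.exp t⌉₊ = m + 1 :=
        Nat.exists_eq_succ_of_ne_zero (Nat.ceil_pos.2 (Real.exp_pos t)).ne'
      have hm1 : Real.exp t ≤ (m:ℝ) + 1 := by
        have := Nat.le_ceil (Real.exp t)
        rw [hm] at this; exact_mod_cast this
      have hm2 : (m:ℝ) < Real.exp t := by
        have := Nat.ceil_lt_add_one (Real.exp_pos t).le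
        rw [hm] at this; push_cast at this; linarith
      refine ⟨boxZ d m, ?_, ?_⟩
      · have hc : ((boxZ d m).card : ℝ) = (2 * (m:ℝ) + 1) ^ d := by
          have : (boxZ d m).card = (2 * m + 1) ^ d := by
            simp only [boxZ, Fintype.card_piFinset, Int.card_Icc, Finset.prod_const,
              Finset.card_univ, Fintype.card_fin]
            congr 1
            omega
          rw [this]; push_cast; ring
        rw [hc]
        have : Real.exp (2 * d * t) = (Real.exp t * Real.exp t) ^ d := by
          rw [← Real.exp_add, ← Real.exp_nat_mul]; ring_nf
        rw [this]
        gcongr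
        nlinarith
      · intro f hf x
        refine (err_bound d f hf _ t (by linarith) (fun k hk => ?_) x).trans ?_
        · refine le_trans ?_ (le_logWeight d m k hk)
          rw [Real.le_log_iff_exp_le (by positivity)]
          exact hm1
        · simp [ht]
end
end

section
/- For every α ∈ (0, 1] there is a constant c > 0, depending only on α, such that for all d ∈ ℕ, all integers m ≥ 2, and every f ∈ F_d^α, the Fourier partial sum over Λ = [-m, m]^d ∩ ℤ^d satisfies ‖f − P_Λ f‖_∞ ≤ (c · log m)^d · m^{-α}; consequently, there is a constant c' > 0 depending only on α with log N^∞(ε, F_d^α) ≤ c' · d² · log²(d) · log(ε^{-1}) for all d ≥ 2 and ε ∈ (0, 1/2). -/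
open MeasureTheory Real Finset

noncomputable section

/-- The Hölder class `F_d^α`: continuous 1-periodic functions with absolutely summable
Fourier coefficients, `∑_k |f̂(k)| ≤ 1`, that are `α`-Hölder with constant 1 with respect
to the Euclidean norm on `ℝ^d`. -/
def FdAlpha (α : ℝ) (d : ℕ) : Set ((Fin d → ℝ) → ℂ) :=
  {f | Continuous f ∧ Periodic1 d f ∧
    Summable (fun k : Fin d → ℤ => ‖fCoeff d f k‖) ∧
    (∑' k : Fin d → ℤ, ‖fCoeff d f k‖) ≤ 1 ∧
    ∀ x y : Fin d → ℝ, ‖f x - f y‖ ≤ Real.sqrt (∑ i, (x i - y i) ^ 2) ^ α}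

lemma periodic_update_int (d : ℕ) (f : (Fin d → ℝ) → ℂ) (hf : Periodic1 d f)
    (x : Fin d → ℝ) (i : Fin d) (z : ℤ) (a : ℝ) :
    f (Function.update x i (a + z)) = f (Function.update x i a) := by
  have h : Function.Periodic (fun t : ℝ => f (Function.update x i t)) 1 := by
    intro t
    have := hf (Function.update x i t) i
    simpa using this
  have h2 := h.int_mul z a
  simpa using h2

lemma periodic_factors (d : ℕ) (f : (Fin d → ℝ) → ℂ) (hf : Periodic1 d f)
    (x y : Fin d → ℝ) (h : ∀ i, (x i : UnitAddCircle) = (y i : UnitAddCircle)) : f x = f y := by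
  classical
  have key : ∀ s : Finset (Fin d), f (fun i => if i ∈ s then y i else x i) = f x := by
    intro s
    induction s using Finset.induction_on with
    | empty => simp
    | insert j s hj ih =>
      rw [← ih]
      obtain ⟨z, hz⟩ : ∃ z : ℤ, x j + z = y j := by
        have h0 : ((y j - x j : ℝ) : UnitAddCircle) = 0 := by
          rw [AddCircle.coe_sub, h j, sub_self]
        obtain ⟨z, hz⟩ := (AddCircle.coe_eq_zero_iff (1 : ℝ)).1 h0
        refine ⟨z, ?_⟩
        simp at hz
        linarith
      have e1 : (fun i => if i ∈ insert j s then y i else x i)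
          = Function.update (fun i => if i ∈ s then y i else x i) j (x j + z) := by
        funext i
        by_cases hi : i = j
        · subst hi; simp [hz]
        · simp [hi]
      have e2 : (fun i => if i ∈ s then y i else x i)
          = Function.update (fun i => if i ∈ s then y i else x i) j (x j) := by
        funext i
        by_cases hi : i = j
        · subst hi; simp [hj]
        · simp [hi]
      rw [e1, periodic_update_int d f hf, ← e2]
  have := key Finset.univ
  simpa using this.symm

lemma mFourier_coe (d : ℕ) (k : Fin d → ℤ) (x : Fin d → ℝ) :
    UnitAddTorus.mFourier k (fun i => (x i : UnitAddCircle)) = eK d k x := by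
  simp only [UnitAddTorus.mFourier, ContinuousMap.coe_mk, eK, fourier_coe_apply]
  rw [← Complex.exp_sum, Finset.mul_sum]
  congr 1
  refine Finset.sum_congr rfl fun i _ => ?_
  simp; ring

lemma inversion (d : ℕ) (f : (Fin d → ℝ) → ℂ) (hc : Continuous f) (hp : Periodic1 d f)
    (hs : Summable (fun k : Fin d → ℤ => ‖fCoeff d f k‖)) (x : Fin d → ℝ) :
    HasSum (fun k => fCoeff d f k * eK d k x) (f x) := by
  have hq : IsOpenQuotientMap
      (Pi.map (fun (_ : Fin d) (x : ℝ) => (x : UnitAddCircle))) :=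
    IsOpenQuotientMap.piMap fun _ => QuotientAddGroup.isOpenQuotientMap_mk
  let q : C(Fin d → ℝ, UnitAddTorus (Fin d)) := ⟨_, hq.continuous⟩
  have hq' : Topology.IsQuotientMap q := hq.isQuotientMap
  have hfac : Function.FactorsThrough (⟨f, hc⟩ : C(Fin d → ℝ, ℂ)) q := by
    intro x y h
    exact periodic_factors d f hp x y fun i => congrFun h i
  let F : C(UnitAddTorus (Fin d), ℂ) := hq'.lift ⟨f, hc⟩ hfac
  have hF : ∀ x : Fin d → ℝ, F (fun i => (x i : UnitAddCircle)) = f x := by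
    intro x
    exact DFunLike.congr_fun (Topology.IsQuotientMap.lift_comp hq' ⟨f, hc⟩ hfac) x
  have hcoef : ∀ k, UnitAddTorus.mFourierCoeff F k = fCoeff d f k := by
    intro k
    rw [UnitAddTorus.mFourierCoeff_eq_integral F k 0, fCoeff]
    have hset : ({x : Fin d → ℝ | ∀ i, x i ∈ Set.Ioc ((0 : Fin d → ℝ) i) ((0 : Fin d → ℝ) i + 1)})
        =ᵐ[volume] cube d := by
      have := Measure.univ_pi_Ioc_ae_eq_Icc (μ := fun _ : Fin d => (volume : Measure ℝ))
        (f := fun _ => 0) (g := fun _ => 1)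
      have e1 : {x : Fin d → ℝ | ∀ i, x i ∈ Set.Ioc ((0 : Fin d → ℝ) i) ((0 : Fin d → ℝ) i + 1)}
          = Set.univ.pi fun _ => Set.Ioc 0 1 := by
        ext x; simp
      have e2 : cube d = Set.Icc (fun _ => (0 : ℝ)) fun _ => 1 := by
        rw [cube, Set.pi_univ_Icc]
      rw [e1, e2]
      exact this
    rw [setIntegral_congr_set hset]
    congr 1
    funext x
    rw [hF, mFourier_coe, smul_eq_mul, mul_comm, eK]
    congr 2
    simp [Finset.mul_sum]
  have := UnitAddTorus.hasSum_mFourier_series_apply_of_summable (f := F) (by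
    refine Summable.of_norm ?_
    simpa [hcoef] using hs) (fun i => (x i : UnitAddCircle))
  simp only [hcoef, mFourier_coe, hF, smul_eq_mul] at this
  exact this

/-- One-dimensional character. -/
def e1 (n : ℤ) (t : ℝ) : ℂ := Complex.exp (((2 * Real.pi * (n * t) : ℝ) : ℂ) * Complex.I)

lemma e1_add (a b : ℤ) (t : ℝ) : e1 (a + b) t = e1 a t * e1 b t := by
  unfold e1; rw [← Complex.exp_add]; congr 1; push_cast; ring

lemma e1_zero (t : ℝ) : e1 0 t = 1 := by simp [e1]

lemma norm_e1 (n : ℤ) (t : ℝ) : ‖e1 n t‖ = 1 := Complex.norm_exp_ofReal_mul_I _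

lemma conj_e1 (n : ℤ) (t : ℝ) : (starRingEnd ℂ) (e1 n t) = e1 (-n) t := by
  unfold e1; rw [← Complex.exp_conj]; congr 1; simp [map_ofNat]

lemma continuous_e1 (n : ℤ) : Continuous (e1 n) := by
  unfold e1; fun_prop

lemma integral_e1 (n : ℤ) :
    ∫ t in (-(1/2) : ℝ)..(1/2), e1 n t = if n = 0 then 1 else 0 := by
  split_ifs with h
  · subst h
    simp only [e1_zero]
    simp; norm_num
  · have hc : (2 * Real.pi * n * Complex.I : ℂ) ≠ 0 := by
      simp [h, Real.pi_ne_zero]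
    have : ∀ t, e1 n t = Complex.exp ((2 * Real.pi * n * Complex.I : ℂ) * t) := by
      intro t; unfold e1; congr 1; push_cast; ring
    simp only [this]
    rw [integral_exp_mul_complex hc]
    have : Complex.exp ((2 * Real.pi * n * Complex.I : ℂ) * ((1/2 : ℝ) : ℂ))
        = Complex.exp ((2 * Real.pi * n * Complex.I : ℂ) * ((-(1/2) : ℝ) : ℂ)) := by
      rw [Complex.exp_eq_exp_iff_exists_int]
      refine ⟨n, ?_⟩
      push_cast; ring
    rw [this, sub_self, zero_div]

lemma eK_update (d : ℕ) (k : Fin d → ℤ) (x : Fin d → ℝ) (j : Fin d) (t : ℝ) :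
    eK d k (Function.update x j (x j - t)) = eK d k x * e1 (-(k j)) t := by
  unfold eK e1
  rw [← Complex.exp_add]
  congr 1
  have : ∑ i, (k i : ℂ) * ((Function.update x j (x j - t) i : ℝ) : ℂ)
      = ∑ i, (k i : ℂ) * (x i : ℂ) - k j * t := by
    rw [← Finset.add_sum_erase _ _ (Finset.mem_univ j),
      ← Finset.add_sum_erase (a := j) _ _ (Finset.mem_univ j)]
    have : ∑ i ∈ Finset.univ.erase j, (k i : ℂ) * ((Function.update x j (x j - t) i : ℝ) : ℂ)
        = ∑ i ∈ Finset.univ.erase j, (k i : ℂ) * (x i : ℂ) := by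
      refine Finset.sum_congr rfl fun i hi => ?_
      rw [Function.update_of_ne (Finset.ne_of_mem_erase hi)]
    rw [this]
    simp
    ring
  rw [this]
  push_cast
  ring

/-- Absolutely convergent Fourier series with coefficients `a`. -/
def TS (d : ℕ) (a : (Fin d → ℤ) → ℂ) (x : Fin d → ℝ) : ℂ := ∑' k, a k * eK d k x

lemma summable_TS {d : ℕ} {a : (Fin d → ℤ) → ℂ} (ha : Summable fun k => ‖a k‖)
    (x : Fin d → ℝ) : Summable fun k => a k * eK d k x := by
  refine Summable.of_norm ?_
  simpa [norm_eK] using ha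

/-- Fourier coefficient of a kernel on `[-1/2,1/2]`. -/
def kHat (K : ℝ → ℂ) (n : ℤ) : ℂ := ∫ t in (-(1/2) : ℝ)..(1/2), K t * e1 (-n) t

lemma TS_conv {d : ℕ} {a : (Fin d → ℤ) → ℂ} (ha : Summable fun k => ‖a k‖)
    {K : ℝ → ℂ} (hK : Continuous K) (j : Fin d) (x : Fin d → ℝ) :
    ∫ t in (-(1/2) : ℝ)..(1/2), TS d a (Function.update x j (x j - t)) * K t
      = TS d (fun k => a k * kHat K (k j)) x := by
  have h := intervalIntegral.hasSum_integral_of_dominated_convergence (μ := volume)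
    (a := -(1/2)) (b := 1/2)
    (F := fun (k : Fin d → ℤ) (t : ℝ) => a k * eK d k (Function.update x j (x j - t)) * K t)
    (f := fun t => TS d a (Function.update x j (x j - t)) * K t)
    (bound := fun k t => ‖a k‖ * ‖K t‖) ?_ ?_ ?_ ?_ ?_
  · rw [TS, ← h.tsum_eq]
    refine tsum_congr fun k => ?_
    rw [kHat, mul_right_comm, ← intervalIntegral.integral_const_mul]
    congr 1
    funext t
    rw [eK_update]; ring
  · intro k
    simp only [eK_update]
    have := continuous_e1 (-(k j))
    exact Continuous.aestronglyMeasurable (by fun_prop)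
  · intro k
    refine Filter.Eventually.of_forall fun t _ => ?_
    rw [norm_mul, norm_mul, norm_eK, mul_one]
  · exact Filter.Eventually.of_forall fun t _ => ha.mul_right _
  · simp only [tsum_mul_right]
    exact Continuous.intervalIntegrable (by fun_prop) _ _
  · exact Filter.Eventually.of_forall fun t _ => (summable_TS ha _).hasSum.mul_right _

lemma TS_mult_bound {d : ℕ} {a : (Fin d → ℤ) → ℂ} (ha : Summable fun k => ‖a k‖)
    {K : ℝ → ℂ} (hK : Continuous K) (j : Fin d) {M L : ℝ} (hM0 : 0 ≤ M)
    (hM : ∀ x, ‖TS d a x‖ ≤ M) (hL : ∫ t in (-(1/2) : ℝ)..(1/2), ‖K t‖ ≤ L) (x : Fin d → ℝ) :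
    ‖TS d (fun k => a k * kHat K (k j)) x‖ ≤ L * M := by
  rw [← TS_conv ha hK]
  calc _ ≤ ∫ t in (-(1/2) : ℝ)..(1/2), M * ‖K t‖ := by
        refine intervalIntegral.norm_integral_le_of_norm_le (by norm_num) ?_ ?_
        · refine Filter.Eventually.of_forall fun t _ => ?_
          rw [norm_mul]
          exact mul_le_mul_of_nonneg_right (hM _) (norm_nonneg _)
        · exact Continuous.intervalIntegrable (by fun_prop) _ _
    _ = M * ∫ t in (-(1/2) : ℝ)..(1/2), ‖K t‖ := intervalIntegral.integral_const_mul _ _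
    _ ≤ M * L := mul_le_mul_of_nonneg_left hL hM0
    _ = _ := mul_comm _ _

/-- The geometric sum kernel. -/
def gs (n : ℕ) (t : ℝ) : ℂ := ∑ j ∈ Finset.range n, e1 j t

lemma continuous_gs (n : ℕ) : Continuous (gs n) := by
  unfold gs
  exact continuous_finsetSum _ fun j _ => continuous_e1 j

lemma norm_gs_le (n : ℕ) (t : ℝ) : ‖gs n t‖ ≤ n := by
  refine (norm_sum_le _ _).trans ?_
  simp [norm_e1]

lemma norm_gs_mul_le (n : ℕ) (t : ℝ) (ht : |t| ≤ 1/2) : ‖gs n t‖ * (2 * |t|) ≤ 1 := by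
  have hpow : ∀ j : ℕ, e1 j t = e1 1 t ^ j := by
    intro j
    induction j with
    | zero => simp [e1_zero]
    | succ j ih => push_cast; rw [e1_add, ih, pow_succ]
  have h1 : gs n t * (e1 1 t - 1) = e1 n t - 1 := by
    unfold gs
    simp only [hpow]
    exact geom_sum_mul _ _
  have h2 : ‖gs n t‖ * ‖e1 1 t - 1‖ ≤ 2 := by
    rw [← norm_mul, h1]
    refine (norm_sub_le _ _).trans ?_
    rw [norm_e1]; norm_num
  have h3 : 4 * |t| ≤ ‖e1 1 t - 1‖ := by
    have : e1 1 t = Complex.exp (Complex.I * ((2 * Real.pi * t : ℝ) : ℂ)) := by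
      unfold e1; congr 1; push_cast; ring
    rw [this, Complex.norm_exp_I_mul_ofReal_sub_one]
    have e : 2 * Real.pi * t / 2 = Real.pi * t := by ring
    rw [e, norm_mul, Real.norm_eq_abs, Real.norm_eq_abs]
    have h4 : |Real.sin (Real.pi * t)| = |Real.sin (Real.pi * |t|)| := by
      rcases abs_cases t with ⟨h, _⟩ | ⟨h, _⟩ <;> rw [h]
      rw [mul_neg, Real.sin_neg, abs_neg]
    rw [h4]
    have h5 := Real.mul_le_sin (x := Real.pi * |t|) (by positivity)
      (by nlinarith [Real.pi_pos])
    have h6 : 2 / Real.pi * (Real.pi * |t|) = 2 * |t| := by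
      field_simp
    rw [h6] at h5
    have := le_abs_self (Real.sin (Real.pi * |t|))
    rw [abs_of_pos (by norm_num : (0:ℝ) < 2)]
    linarith
  nlinarith [norm_nonneg (gs n t)]

/-- Dirichlet kernel. -/
def Dk (m : ℕ) (t : ℝ) : ℂ := e1 (-m) t * gs (2 * m + 1) t

lemma continuous_Dk (m : ℕ) : Continuous (Dk m) :=
  (continuous_e1 _).mul (continuous_gs _)

lemma kHat_Dk (m : ℕ) (k : ℤ) : kHat (Dk m) k = if |k| ≤ m then 1 else 0 := by
  have : ∀ t, Dk m t * e1 (-k) t = ∑ j ∈ Finset.range (2 * m + 1), e1 (j - m - k) t := by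
    intro t
    rw [Dk, gs, Finset.mul_sum, Finset.sum_mul]
    refine Finset.sum_congr rfl fun j _ => ?_
    rw [← e1_add, ← e1_add]; congr 1; ring
  rw [kHat]
  simp only [this]
  rw [intervalIntegral.integral_finsetSum
    (fun j _ => (continuous_e1 _).intervalIntegrable _ _)]
  simp only [integral_e1]
  split_ifs with h
  · rw [abs_le] at h
    rw [Finset.sum_eq_single (k + m).toNat]
    · rw [if_pos (by omega)]
    · intro b _ hb
      rw [if_neg (by omega)]
    · intro hb
      exfalso; apply hb; rw [Finset.mem_range]; omega
  · refine Finset.sum_eq_zero fun j hj => ?_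
    rw [Finset.mem_range] at hj
    rw [if_neg]
    intro h'
    apply h; rw [abs_le]; omega

lemma Dk_L1 (m : ℕ) (hm : 2 ≤ m) :
    ∫ t in (-(1/2) : ℝ)..(1/2), ‖Dk m t‖ ≤ 6 * Real.log m := by
  set N : ℝ := 2 * m + 1 with hN
  have hm' : (2 : ℝ) ≤ m := by exact_mod_cast hm
  have hNpos : 0 < N := by rw [hN]; positivity
  have hb : ∀ t : ℝ, |t| ≤ 1/2 → ‖Dk m t‖ ≤ 3 / 2 * (N / (1 + N * |t|)) := by
    intro t ht
    rw [Dk, norm_mul, norm_e1, one_mul]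
    have h1 := norm_gs_le (2 * m + 1) t
    have h2 := norm_gs_mul_le (2 * m + 1) t ht
    push_cast at h1
    have h3 : 0 < 1 + N * |t| := by positivity
    rw [← mul_div_assoc, le_div_iff₀ h3]
    rw [← hN] at h1
    nlinarith
  have hcont : Continuous fun t : ℝ => 3 / 2 * (N / (1 + N * |t|)) := by
    refine continuous_const.mul (Continuous.div continuous_const (by fun_prop) ?_)
    intro t
    positivity
  have hhalf : ∫ t in (0 : ℝ)..(1/2), 3 / 2 * (N / (1 + N * |t|)) = 3 / 2 * Real.log (1 + N / 2) := by
    rw [intervalIntegral.integral_const_mul]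
    congr 1
    have : ∀ t ∈ Set.uIcc (0 : ℝ) (1/2),
        HasDerivAt (fun t => Real.log (1 + N * t)) (N / (1 + N * |t|)) t := by
      intro t ht
      rw [Set.uIcc_of_le (by norm_num)] at ht
      rw [abs_of_nonneg ht.1]
      have h3 : 1 + N * t ≠ 0 := by have := ht.1; positivity
      have := (((hasDerivAt_id t).const_mul N).const_add 1).log h3
      simpa using this
    rw [intervalIntegral.integral_eq_sub_of_hasDerivAt this]
    · simp; congr 1
    · refine Continuous.intervalIntegrable (Continuous.div continuous_const (by fun_prop) ?_) _ _
      intro t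
      positivity
  have hhalf' : ∫ t in (-(1/2) : ℝ)..0, 3 / 2 * (N / (1 + N * |t|))
      = 3 / 2 * Real.log (1 + N / 2) := by
    rw [← hhalf]
    have := intervalIntegral.integral_comp_neg (a := 0) (b := 1/2)
      (fun t : ℝ => 3 / 2 * (N / (1 + N * |t|)))
    simp only [abs_neg, neg_zero] at this
    exact this.symm
  calc _ ≤ ∫ t in (-(1/2) : ℝ)..(1/2), 3 / 2 * (N / (1 + N * |t|)) := by
        refine intervalIntegral.integral_mono_on (by norm_num)
          ((continuous_Dk m).norm.intervalIntegrable _ _) (hcont.intervalIntegrable _ _) ?_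
        intro t ht
        exact hb t (abs_le.2 ⟨ht.1, ht.2⟩)
    _ = 3 * Real.log (1 + N / 2) := by
        rw [← intervalIntegral.integral_add_adjacent_intervals
          (hcont.intervalIntegrable _ 0) (hcont.intervalIntegrable _ _), hhalf, hhalf']
        ring
    _ ≤ 3 * Real.log (m ^ 2) := by
        have : Real.log (1 + N / 2) ≤ Real.log ((m : ℝ) ^ 2) := by
          refine Real.log_le_log (by positivity) ?_
          rw [hN]; nlinarith
        linarith
    _ = _ := by rw [Real.log_pow]; push_cast; ring

lemma gs_normSq (n : ℕ) (t : ℝ) : ((‖gs n t‖ ^ 2 : ℝ) : ℂ)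
    = ∑ x ∈ Finset.range n ×ˢ Finset.range n, e1 ((x.1 : ℤ) - x.2) t := by
  push_cast
  rw [← Complex.mul_conj', gs, map_sum, Finset.sum_mul_sum, Finset.sum_product]
  refine Finset.sum_congr rfl fun i _ => Finset.sum_congr rfl fun j _ => ?_
  rw [conj_e1, ← e1_add, sub_eq_add_neg]

/-- Unnormalised Jackson kernel. -/
def Jk (n : ℕ) (t : ℝ) : ℂ := ((‖gs n t‖ ^ 4 : ℝ) : ℂ)

lemma continuous_Jk (n : ℕ) : Continuous (Jk n) := by
  unfold Jk
  have := continuous_gs n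
  fun_prop

lemma gs_four (n : ℕ) (t : ℝ) : Jk n t
    = ∑ x ∈ (Finset.range n ×ˢ Finset.range n) ×ˢ (Finset.range n ×ˢ Finset.range n),
      e1 (((x.1.1 : ℤ) - x.1.2) + (x.2.1 - x.2.2)) t := by
  have : Jk n t = ((‖gs n t‖ ^ 2 : ℝ) : ℂ) * ((‖gs n t‖ ^ 2 : ℝ) : ℂ) := by
    unfold Jk; push_cast; ring
  rw [this, gs_normSq, Finset.sum_mul_sum, ← Finset.sum_product']
  refine Finset.sum_congr rfl fun i _ => ?_
  rw [e1_add]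

lemma integral_gs_sq (n : ℕ) : ∫ t in (-(1/2) : ℝ)..(1/2), ‖gs n t‖ ^ 2 = n := by
  have h : ((∫ t in (-(1/2) : ℝ)..(1/2), ‖gs n t‖ ^ 2 : ℝ) : ℂ) = n := by
    rw [← intervalIntegral.integral_ofReal]
    simp only [gs_normSq]
    rw [intervalIntegral.integral_finsetSum
      (fun j _ => (continuous_e1 _).intervalIntegrable _ _)]
    simp only [integral_e1]
    rw [Finset.sum_product]
    have : ∀ i ∈ Finset.range n, ∑ j ∈ Finset.range n,
        (if ((i : ℤ) - j = 0) then (1 : ℂ) else 0) = 1 := by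
      intro i hi
      rw [Finset.sum_eq_single i]
      · simp
      · intro b _ hb
        rw [if_neg (by omega)]
      · intro h; exact absurd hi h
    rw [Finset.sum_congr rfl this]
    simp
  exact_mod_cast h

lemma kHat_Jk (n : ℕ) (k : ℤ) : kHat (Jk n) k
    = ∑ x ∈ (Finset.range n ×ˢ Finset.range n) ×ˢ (Finset.range n ×ˢ Finset.range n),
      if (((x.1.1 : ℤ) - x.1.2) + (x.2.1 - x.2.2)) + -k = 0 then (1 : ℂ) else 0 := by
  rw [kHat]
  simp only [gs_four, Finset.sum_mul, ← e1_add]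
  rw [intervalIntegral.integral_finsetSum
      (fun j _ => (continuous_e1 _).intervalIntegrable _ _)]
  simp only [integral_e1]

lemma kHat_Jk_zero (m : ℕ) (k : ℤ) (hk : ¬ |k| ≤ m) : kHat (Jk (m / 2 + 1)) k = 0 := by
  rw [kHat_Jk]
  refine Finset.sum_eq_zero fun x hx => ?_
  simp only [Finset.mem_product, Finset.mem_range] at hx
  rw [if_neg]
  intro h
  apply hk
  rw [abs_le]
  omega

/-- The mass of the Jackson kernel. -/
def JA (n : ℕ) : ℝ := ∫ t in (-(1/2) : ℝ)..(1/2), ‖gs n t‖ ^ 4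

lemma JA_lower (n : ℕ) (hn : 1 ≤ n) : (n : ℝ) ^ 3 / 2 ≤ JA n := by
  have h1 : ((JA n : ℝ) : ℂ) = (Finset.addEnergy (Finset.range n) (Finset.range n) : ℂ) := by
    have e : ((JA n : ℝ) : ℂ) = kHat (Jk n) 0 := by
      rw [JA, kHat, ← intervalIntegral.integral_ofReal]
      simp [e1_zero, Jk]
    rw [e, kHat_Jk, Finset.addEnergy, Finset.card_filter]
    push_cast
    refine Finset.sum_congr rfl fun x _ => ?_
    congr 1
    apply propext
    constructor <;> intro h <;> omega
  have h2 : JA n = (Finset.addEnergy (Finset.range n) (Finset.range n) : ℝ) := by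
    exact_mod_cast h1
  have h3 := Finset.card_sq_le_card_mul_addEnergy (Finset.range n) (Finset.range n)
    (Finset.range (2 * n))
  rw [Finset.filter_true_of_mem] at h3
  · simp only [Finset.card_product, Finset.card_range] at h3
    have h4 : ((n : ℝ) * n) ^ 2 ≤ 2 * n * JA n := by
      rw [h2]; exact_mod_cast h3
    have hn' : (0 : ℝ) < n := by exact_mod_cast hn
    have h5 : (2 * n : ℝ) * (n ^ 3 / 2) ≤ 2 * n * JA n := by
      refine le_trans (le_of_eq ?_) h4
      ring
    exact le_of_mul_le_mul_left h5 (by positivity)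
  · intro x hx
    simp only [Finset.mem_product, Finset.mem_range] at hx ⊢
    omega

lemma J_moment (α : ℝ) (h0 : 0 < α) (h1 : α ≤ 1) (n : ℕ) (hn : 1 ≤ n) :
    ∫ t in (-(1/2) : ℝ)..(1/2), |t| ^ α * ‖gs n t‖ ^ 4 ≤ 5 / 4 * n ^ 3 * (n : ℝ) ^ (-α) := by
  have hn' : (0 : ℝ) < n := by exact_mod_cast hn
  have hg := continuous_gs n
  have hpt : ∀ t : ℝ, |t| ≤ 1/2 → |t| ^ α * ‖gs n t‖ ^ 4
      ≤ (n : ℝ) ^ (-α) * (5 / 4 * n ^ 2) * ‖gs n t‖ ^ 2 := by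
    intro t ht
    have ha : |t| ^ α = (n : ℝ) ^ (-α) * (n * |t|) ^ α := by
      rw [Real.mul_rpow hn'.le (abs_nonneg _), ← mul_assoc, ← Real.rpow_add hn']
      simp
    have hb : (n * |t|) ^ α ≤ 1 + (n * |t|) ^ 2 := by
      have hx : 0 ≤ n * |t| := by positivity
      rcases le_total (n * |t|) 1 with h | h
      · have := Real.rpow_le_one hx h h0.le
        nlinarith
      · have : (n * |t|) ^ α ≤ (n * |t|) ^ (1 : ℝ) := Real.rpow_le_rpow_of_exponent_le h h1
        rw [Real.rpow_one] at this
        nlinarith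
    have hc := norm_gs_le n t
    have hd := norm_gs_mul_le n t ht
    set G := ‖gs n t‖ with hG
    have hG0 : 0 ≤ G := norm_nonneg _
    have he : (1 + (n * |t|) ^ 2) * G ^ 2 ≤ 5 / 4 * n ^ 2 := by
      have h2 : G ^ 2 ≤ (n : ℝ) ^ 2 := pow_le_pow_left₀ hG0 hc 2
      have h3 : (G * (2 * |t|)) ^ 2 ≤ 1 ^ 2 := pow_le_pow_left₀ (by positivity) hd 2
      have h4 : (n : ℝ) ^ 2 * (G * (2 * |t|)) ^ 2 ≤ n ^ 2 * 1 := by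
        refine mul_le_mul_of_nonneg_left (by simpa using h3) (by positivity)
      nlinarith
    rw [ha]
    have hp : 0 ≤ (n : ℝ) ^ (-α) := Real.rpow_nonneg hn'.le _
    calc (n : ℝ) ^ (-α) * (n * |t|) ^ α * G ^ 4
        ≤ (n : ℝ) ^ (-α) * (1 + (n * |t|) ^ 2) * G ^ 4 := by gcongr
      _ = (n : ℝ) ^ (-α) * ((1 + (n * |t|) ^ 2) * G ^ 2) * G ^ 2 := by ring
      _ ≤ _ := by gcongr
  calc _ ≤ ∫ t in (-(1/2) : ℝ)..(1/2), (n : ℝ) ^ (-α) * (5 / 4 * n ^ 2) * ‖gs n t‖ ^ 2 := by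
        refine intervalIntegral.integral_mono_on (by norm_num) ?_ ?_ ?_
        · refine Continuous.intervalIntegrable ?_ _ _
          exact (continuous_abs.rpow_const fun _ => Or.inr h0.le).mul (by fun_prop)
        · exact Continuous.intervalIntegrable (by fun_prop) _ _
        · intro t ht
          exact hpt t (abs_le.2 ⟨ht.1, ht.2⟩)
    _ = _ := by
        rw [intervalIntegral.integral_const_mul, integral_gs_sq]; ring

lemma jackson {d : ℕ} {a : (Fin d → ℤ) → ℂ} (ha : Summable fun k => ‖a k‖)
    {f : (Fin d → ℝ) → ℂ} (hf : Continuous f) (hfa : ∀ x, f x = TS d a x)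
    (α : ℝ) (h0 : 0 < α) (h1 : α ≤ 1) (j : Fin d)
    (hH : ∀ x t, ‖f x - f (Function.update x j (x j - t))‖ ≤ |t| ^ α)
    (m : ℕ) (hm : 2 ≤ m) (x : Fin d → ℝ) :
    ‖f x - TS d (fun k => a k * kHat (Jk (m / 2 + 1)) (k j)) x / JA (m / 2 + 1)‖
      ≤ 5 * (m : ℝ) ^ (-α) := by
  set n := m / 2 + 1 with hn
  have hn1 : 1 ≤ n := by omega
  have hn' : (0 : ℝ) < n := by exact_mod_cast hn1
  have hA := JA_lower n hn1
  have hA0 : 0 < JA n := lt_of_lt_of_le (by positivity) hA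
  have hg := continuous_gs n
  have hJ := continuous_Jk n
  have hupd : Continuous fun t : ℝ => f (Function.update x j (x j - t)) := by
    refine hf.comp ?_
    exact continuous_const.update j (by fun_prop)
  have e1' : f x * JA n = ∫ t in (-(1/2) : ℝ)..(1/2), f x * Jk n t := by
    rw [intervalIntegral.integral_const_mul, JA, ← intervalIntegral.integral_ofReal]
    rfl
  have e2 : TS d (fun k => a k * kHat (Jk n) (k j)) x
      = ∫ t in (-(1/2) : ℝ)..(1/2), f (Function.update x j (x j - t)) * Jk n t := by
    rw [← TS_conv ha hJ]
    simp only [hfa]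
  have e3 : f x - TS d (fun k => a k * kHat (Jk n) (k j)) x / JA n
      = (∫ t in (-(1/2) : ℝ)..(1/2), (f x - f (Function.update x j (x j - t))) * Jk n t) / JA n := by
    have : (JA n : ℂ) ≠ 0 := by exact_mod_cast hA0.ne'
    simp only [sub_mul]
    rw [intervalIntegral.integral_sub
      (Continuous.intervalIntegrable (by fun_prop) _ _)
      (Continuous.intervalIntegrable (by fun_prop) _ _), ← e1', ← e2]
    field_simp
  rw [e3, norm_div, Complex.norm_real, Real.norm_of_nonneg hA0.le, div_le_iff₀ hA0]
  have hcmp : (n : ℝ) ^ (-α) ≤ 2 * (m : ℝ) ^ (-α) := by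
    have hm0 : (0 : ℝ) < m := by exact_mod_cast (by omega : 0 < m)
    have hmn : (m : ℝ) / 2 ≤ n := by
      have : (m : ℝ) ≤ 2 * n := by exact_mod_cast (by omega : m ≤ 2 * n)
      linarith
    calc (n : ℝ) ^ (-α) ≤ ((m : ℝ) / 2) ^ (-α) :=
          Real.rpow_le_rpow_of_nonpos (by positivity) hmn (by linarith)
      _ = 2 ^ α * (m : ℝ) ^ (-α) := by
          rw [Real.div_rpow hm0.le (by norm_num), Real.rpow_neg (by norm_num : (0:ℝ) ≤ 2)]
          field_simp
      _ ≤ 2 ^ (1 : ℝ) * (m : ℝ) ^ (-α) := by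
          gcongr
          · norm_num
      _ = _ := by rw [Real.rpow_one]
  calc _ ≤ ∫ t in (-(1/2) : ℝ)..(1/2), |t| ^ α * ‖gs n t‖ ^ 4 := by
        refine intervalIntegral.norm_integral_le_of_norm_le (by norm_num) ?_ ?_
        · refine Filter.Eventually.of_forall fun t _ => ?_
          rw [norm_mul, Jk, Complex.norm_real, Real.norm_of_nonneg (by positivity)]
          exact mul_le_mul_of_nonneg_right (hH x t) (by positivity)
        · refine Continuous.intervalIntegrable ?_ _ _
          exact (continuous_abs.rpow_const fun _ => Or.inr h0.le).mul (by fun_prop)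
    _ ≤ 5 / 4 * n ^ 3 * (n : ℝ) ^ (-α) := J_moment α h0 h1 n hn1
    _ ≤ 5 / 4 * n ^ 3 * (2 * (m : ℝ) ^ (-α)) := by gcongr
    _ = 5 * (m : ℝ) ^ (-α) * (n ^ 3 / 2) := by ring
    _ ≤ _ := by gcongr

lemma TS_sub {d : ℕ} {a b : (Fin d → ℤ) → ℂ} (ha : Summable fun k => ‖a k‖)
    (hb : Summable fun k => ‖b k‖) (x : Fin d → ℝ) :
    TS d (fun k => a k - b k) x = TS d a x - TS d b x := by
  unfold TS
  rw [← (summable_TS ha x).tsum_sub (summable_TS hb x)]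
  refine tsum_congr fun k => by ring

lemma TS_add {d : ℕ} {a b : (Fin d → ℤ) → ℂ} (ha : Summable fun k => ‖a k‖)
    (hb : Summable fun k => ‖b k‖) (x : Fin d → ℝ) :
    TS d (fun k => a k + b k) x = TS d a x + TS d b x := by
  unfold TS
  rw [← (summable_TS ha x).tsum_add (summable_TS hb x)]
  refine tsum_congr fun k => by ring

lemma summable_norm_sub {ι : Type*} {a b : ι → ℂ} (ha : Summable fun k => ‖a k‖)
    (hb : Summable fun k => ‖b k‖) : Summable fun k => ‖a k - b k‖ :=
  Summable.of_nonneg_of_le (fun _ => norm_nonneg _) (fun _ => norm_sub_le _ _) (ha.add hb)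

lemma norm_kHat_le {K : ℝ → ℂ} (hK : Continuous K) (n : ℤ) :
    ‖kHat K n‖ ≤ ∫ t in (-(1/2) : ℝ)..(1/2), ‖K t‖ := by
  unfold kHat
  refine intervalIntegral.norm_integral_le_of_norm_le (by norm_num) ?_
    (hK.norm.intervalIntegrable _ _)
  refine Filter.Eventually.of_forall fun t _ => ?_
  rw [norm_mul, norm_e1, mul_one]

lemma summable_mult {d : ℕ} {a : (Fin d → ℤ) → ℂ} (ha : Summable fun k => ‖a k‖)
    {K : ℝ → ℂ} (hK : Continuous K) (j : Fin d) :
    Summable fun k => ‖a k * kHat K (k j)‖ := by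
  refine Summable.of_nonneg_of_le (fun _ => norm_nonneg _) (fun k => ?_)
    (ha.mul_right (∫ t in (-(1/2) : ℝ)..(1/2), ‖K t‖))
  rw [norm_mul]
  exact mul_le_mul_of_nonneg_left (norm_kHat_le hK _) (norm_nonneg _)

lemma tail_one {d : ℕ} {a : (Fin d → ℤ) → ℂ} (ha : Summable fun k => ‖a k‖)
    {f : (Fin d → ℝ) → ℂ} (hf : Continuous f) (hfa : ∀ x, f x = TS d a x)
    (α : ℝ) (h0 : 0 < α) (h1 : α ≤ 1) (j : Fin d)
    (hH : ∀ x t, ‖f x - f (Function.update x j (x j - t))‖ ≤ |t| ^ α)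
    (m : ℕ) (hm : 2 ≤ m) (x : Fin d → ℝ) :
    ‖TS d (fun k => a k - a k * kHat (Dk m) (k j)) x‖
      ≤ (1 + 6 * Real.log m) * (5 * (m : ℝ) ^ (-α)) := by
  set n := m / 2 + 1 with hn
  set c : (Fin d → ℤ) → ℂ := fun k => a k * kHat (Jk n) (k j) / JA n with hc
  have hcs : Summable fun k => ‖c k‖ := by
    simp only [hc, norm_div]
    exact (summable_mult ha (continuous_Jk n) j).div_const _
  have hTc : ∀ y, TS d c y = TS d (fun k => a k * kHat (Jk n) (k j)) y / JA n := by
    intro y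
    unfold TS
    rw [← tsum_div_const]
    refine tsum_congr fun k => ?_
    simp only [hc]; ring
  set b : (Fin d → ℤ) → ℂ := fun k => a k - c k with hb
  have hbs : Summable fun k => ‖b k‖ := summable_norm_sub ha hcs
  have hbB : ∀ y, ‖TS d b y‖ ≤ 5 * (m : ℝ) ^ (-α) := by
    intro y
    rw [hb, TS_sub ha hcs, ← hfa, hTc]
    exact jackson ha hf hfa α h0 h1 j hH m hm y
  have heq : (fun k => a k - a k * kHat (Dk m) (k j))
      = fun k => b k - b k * kHat (Dk m) (k j) := by
    funext k
    rw [kHat_Dk]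
    split_ifs with h
    · simp
    · simp [hb, hc, hn, kHat_Jk_zero m (k j) h]
  rw [heq, TS_sub hbs (summable_mult hbs (continuous_Dk m) j)]
  have h2 := TS_mult_bound hbs (continuous_Dk m) j (by positivity) hbB (Dk_L1 m hm) x
  refine (norm_sub_le _ _).trans ?_
  have := hbB x
  linarith

lemma main_bound (α : ℝ) (h0 : 0 < α) (h1 : α ≤ 1) (d m : ℕ) (hd : 1 ≤ d) (hm : 2 ≤ m)
    (f : (Fin d → ℝ) → ℂ) (hf : f ∈ FdAlpha α d) (x : Fin d → ℝ) :
    ‖f x - ∑ k ∈ boxZ d m, fCoeff d f k * eK d k x‖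
      ≤ (90 * Real.log m) ^ d * (m : ℝ) ^ (-α) := by
  classical
  obtain ⟨hfc, hfp, hs, -, hHol⟩ := hf
  set a := fCoeff d f with ha
  have hfa : ∀ y, f y = TS d a y := fun y => (inversion d f hfc hfp hs y).tsum_eq.symm
  have hH : ∀ (j : Fin d) (y : Fin d → ℝ) (t : ℝ),
      ‖f y - f (Function.update y j (y j - t))‖ ≤ |t| ^ α := by
    intro j y t
    refine (hHol _ _).trans (le_of_eq ?_)
    congr 1
    rw [Finset.sum_eq_single j]
    · simp [Real.sqrt_sq_eq_abs]
    · intro i _ hi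
      simp [hi]
    · simp
  set B := 6 * Real.log m with hB
  have hm' : (2 : ℝ) ≤ m := by exact_mod_cast hm
  have hB2 : 2 ≤ B := by
    have := Real.log_le_log (by norm_num) hm'
    have := Real.log_two_gt_d9
    linarith
  set q := (m : ℝ) ^ (-α) with hq
  have hq0 : 0 ≤ q := Real.rpow_nonneg (by linarith) _
  let aS : Finset (Fin d) → (Fin d → ℤ) → ℂ :=
    fun S k => if ∀ i ∈ S, |k i| ≤ m then a k else 0
  have haS : ∀ S, Summable fun k => ‖aS S k‖ := by
    intro S
    refine Summable.of_nonneg_of_le (fun _ => norm_nonneg _) (fun k => ?_) hs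
    simp only [aS]
    split_ifs
    · exact le_rfl
    · simp
  have key : ∀ S : Finset (Fin d), ∀ y,
      ‖TS d (fun k => a k - aS S k) y‖ ≤ 15 * q * (B ^ S.card - 1) := by
    intro S
    induction S using Finset.induction_on with
    | empty => intro y; simp [aS, TS]
    | insert j S hj ih =>
      intro y
      have heq : (fun k => a k - aS (insert j S) k)
          = fun k => (a k - a k * kHat (Dk m) (k j))
            + (a k - aS S k) * kHat (Dk m) (k j) := by
        funext k
        simp only [aS, kHat_Dk, Finset.forall_mem_insert]
        by_cases h : |k j| ≤ m <;> by_cases h' : ∀ i ∈ S, |k i| ≤ m <;> simp [h, h']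
      have hds := summable_norm_sub hs (haS S)
      have hB1 : 1 ≤ B ^ S.card := one_le_pow₀ (by linarith)
      rw [heq, TS_add (summable_norm_sub hs (summable_mult hs (continuous_Dk m) j))
        (summable_mult hds (continuous_Dk m) j), Finset.card_insert_of_notMem hj]
      have t1 := tail_one hs hfc hfa α h0 h1 j (hH j) m hm y
      have t2 := TS_mult_bound hds (continuous_Dk m) j
        (mul_nonneg (by positivity) (by linarith)) ih (Dk_L1 m hm) y
      refine (norm_add_le _ _).trans ((add_le_add t1 t2).trans ?_)
      rw [← hB, ← hq, pow_succ]
      nlinarith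
  have hfin : f x - ∑ k ∈ boxZ d m, a k * eK d k x
      = TS d (fun k => a k - aS Finset.univ k) x := by
    rw [TS_sub hs (haS _), ← hfa]
    congr 1
    unfold TS
    rw [tsum_eq_sum (s := boxZ d m)]
    · refine Finset.sum_congr rfl fun k hk => ?_
      have : ∀ i ∈ (Finset.univ : Finset (Fin d)), |k i| ≤ m := by
        intro i _
        simp only [boxZ, Fintype.mem_piFinset, Finset.mem_Icc] at hk
        exact abs_le.2 (hk i)
      simp only [aS, if_pos this]
    · intro k hk
      have : ¬ ∀ i ∈ (Finset.univ : Finset (Fin d)), |k i| ≤ m := by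
        intro h
        apply hk
        simp only [boxZ, Fintype.mem_piFinset, Finset.mem_Icc]
        exact fun i => abs_le.1 (h i (Finset.mem_univ i))
      simp only [aS, if_neg this, zero_mul]
  rw [hfin]
  refine (key _ x).trans ?_
  rw [Finset.card_univ, Fintype.card_fin]
  have e : 90 * Real.log m = 15 * B := by rw [hB]; ring
  rw [e, mul_pow 15 B]
  have h15 : (15 : ℝ) ≤ 15 ^ d := by
    calc (15 : ℝ) = 15 ^ 1 := by norm_num
      _ ≤ 15 ^ d := pow_le_pow_right₀ (by norm_num) hd
  have hBd : 0 ≤ B ^ d := by positivity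
  calc 15 * q * (B ^ d - 1) ≤ 15 * B ^ d * q := by nlinarith
    _ ≤ _ := by gcongr

set_option maxHeartbeats 1000000 in
lemma second_part (α : ℝ) (h0 : 0 < α) (h1 : α ≤ 1) :
    ∃ c' : ℝ, 0 < c' ∧
        ∀ (d : ℕ) (ε : ℝ), 2 ≤ d → ε ∈ Set.Ioo (0 : ℝ) (1/2) →
          ∃ Λ : Finset (Fin d → ℤ),
            Real.log Λ.card ≤ c' * d ^ 2 * Real.log d ^ 2 * Real.log ε⁻¹ ∧
            ∀ f ∈ FdAlpha α d, ∀ x : Fin d → ℝ,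
              ‖f x - ∑ k ∈ Λ, fCoeff d f k * eK d k x‖ ≤ ε := by
  set w := Real.log (180 / α) with hw
  have hw0 : 0 < w := Real.log_pos (by rw [lt_div_iff₀ h0]; linarith)
  refine ⟨8 * (2 + 2 / α * (w + 2)), by positivity, ?_⟩
  intro d ε hd hε
  have hd2 : (2 : ℝ) ≤ d := by exact_mod_cast hd
  set l := Real.log ε⁻¹ with hl
  set D := Real.log (d : ℝ) with hD
  have hlog2 := Real.log_two_gt_d9
  have hDl : Real.log 2 ≤ D := Real.log_le_log (by norm_num) hd2
  have hll : Real.log 2 ≤ l := by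
    refine Real.log_le_log (by norm_num) ?_
    rw [le_inv_comm₀ (by norm_num) hε.1]
    have := hε.2
    norm_num at this ⊢
    linarith
  set Y := 2 / α * (d * (w + D) + l) with hY
  have hY0 : 0 < Y := by
    have : 0 < D := by linarith
    have : 0 < l := by linarith
    positivity
  set m := ⌈Real.exp Y⌉₊ with hm
  have hmY : Real.exp Y ≤ m := Nat.le_ceil _
  have hmY' : (m : ℝ) < Real.exp Y + 1 := Nat.ceil_lt_add_one (Real.exp_pos _).le
  have hexp : 1 < Real.exp Y := Real.one_lt_exp_iff.2 hY0
  have hm2 : 2 ≤ m := by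
    have : (1 : ℝ) < m := lt_of_lt_of_le hexp hmY
    exact_mod_cast this
  have hm0 : (0 : ℝ) < m := by linarith
  refine ⟨boxZ d m, ?_, ?_⟩
  · have hcard : ((boxZ d m).card : ℝ) = (2 * m + 1) ^ d := by
      have : (boxZ d m).card = (2 * m + 1) ^ d := by
        simp only [boxZ, Fintype.card_piFinset, Int.card_Icc, Finset.prod_const, Finset.card_univ,
          Fintype.card_fin]
        congr 1
        omega
      rw [this]; push_cast; ring
    rw [hcard, Real.log_pow]
    have hlogm : Real.log (2 * m + 1) ≤ 2 + Y := by
      rw [Real.log_le_iff_le_exp (by positivity), Real.exp_add]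
      have h5 : (5 : ℝ) ≤ Real.exp 2 := by
        have := Real.exp_one_gt_d9
        have e : Real.exp 2 = Real.exp 1 * Real.exp 1 := by rw [← Real.exp_add]; norm_num
        rw [e]; nlinarith
      nlinarith
    have hX : 1 ≤ 8 * (D ^ 2 * l) := by
      have a1 : (1/2 : ℝ) ≤ D := by linarith
      have a2 : (1/2 : ℝ) ≤ l := by linarith
      have a3 : (1/4 : ℝ) ≤ D ^ 2 := by nlinarith
      nlinarith
    have hXD : D ≤ 8 * (D ^ 2 * l) := by
      have a1 : (1/2 : ℝ) ≤ D := by linarith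
      have a2 : (1/2 : ℝ) ≤ l := by linarith
      have a3 : (1/4 : ℝ) ≤ D * l := by nlinarith
      nlinarith
    have hXl : l ≤ 8 * (D ^ 2 * l) := by
      have a1 : (1/2 : ℝ) ≤ D := by linarith
      have a2 : (1/2 : ℝ) ≤ l := by linarith
      have a3 : (1/4 : ℝ) ≤ D ^ 2 := by nlinarith
      nlinarith
    set X := 8 * (D ^ 2 * l) with hXdef
    have hin : d * (w + D) + l ≤ (w + 2) * (d * X) := by
      have b1 : w ≤ w * X := le_mul_of_one_le_right hw0.le hX
      have b2 : d * (w + D) ≤ d * (w * X + X) := by gcongr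
      have b3 : l ≤ d * X := by
        have : 1 * X ≤ (d : ℝ) * X := mul_le_mul_of_nonneg_right (by linarith) (by linarith)
        linarith
      linarith [mul_add (d : ℝ) (w * X) X, add_mul w 2 (d * X), mul_left_comm (d : ℝ) w X]
    have hYle : Y ≤ 2 / α * ((w + 2) * (d * X)) := by
      rw [hY]; gcongr
    have h2le : (2 : ℝ) ≤ 2 * (d * X) := by
      have : 1 * 1 ≤ (d : ℝ) * X := mul_le_mul (by linarith) hX (by norm_num) (by linarith)
      linarith
    calc (d : ℝ) * Real.log (2 * m + 1) ≤ d * (2 * (d * X) + 2 / α * ((w + 2) * (d * X))) := by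
          gcongr; linarith
      _ = 8 * (2 + 2 / α * (w + 2)) * d ^ 2 * D ^ 2 * l := by rw [hXdef]; ring
  · intro f hf x
    refine (main_bound α h0 h1 d m (by omega) hm2 f hf x).trans ?_
    have hd0 : (0 : ℝ) < d := by linarith
    have hs : 0 < α / (2 * d) := by positivity
    have hl1 : Real.log m ≤ (m : ℝ) ^ (α / (2 * d)) / (α / (2 * d)) :=
      Real.log_le_rpow_div hm0.le hs
    have hlm0 : 0 ≤ Real.log m := Real.log_nonneg (by linarith)
    have hC : 90 * Real.log m ≤ (180 / α * d) * (m : ℝ) ^ (α / (2 * d)) := by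
      calc 90 * Real.log m ≤ 90 * ((m : ℝ) ^ (α / (2 * d)) / (α / (2 * d))) := by gcongr
        _ = _ := by field_simp; ring
    have hpow : (90 * Real.log m) ^ d ≤ (180 / α * d) ^ d * (m : ℝ) ^ (α / 2) := by
      calc (90 * Real.log m) ^ d ≤ ((180 / α * d) * (m : ℝ) ^ (α / (2 * d))) ^ d := by
            gcongr
        _ = _ := by
            rw [mul_pow, ← Real.rpow_natCast ((m : ℝ) ^ (α / (2 * d))), ← Real.rpow_mul hm0.le]
            congr 2
            field_simp
    have hexpD : (180 / α * d) ^ d = Real.exp (d * (w + D)) := by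
      rw [Real.exp_nat_mul, Real.exp_add, hw, hD, Real.exp_log (by positivity), Real.exp_log hd0]
    have hlogm : Y ≤ Real.log m := (Real.le_log_iff_exp_le hm0).2 hmY
    calc (90 * Real.log m) ^ d * (m : ℝ) ^ (-α)
        ≤ ((180 / α * d) ^ d * (m : ℝ) ^ (α / 2)) * (m : ℝ) ^ (-α) := by gcongr
      _ = Real.exp (d * (w + D)) * (m : ℝ) ^ (-(α / 2)) := by
          rw [hexpD, mul_assoc, ← Real.rpow_add hm0]; congr 2; ring
      _ = Real.exp (d * (w + D) - α / 2 * Real.log m) := by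
          rw [Real.rpow_def_of_pos hm0, ← Real.exp_add]; congr 1; ring
      _ ≤ Real.exp (-l) := by
          apply Real.exp_le_exp.2
          have : α / 2 * Y ≤ α / 2 * Real.log m := by gcongr
          have e : α / 2 * Y = d * (w + D) + l := by rw [hY]; field_simp
          linarith
      _ = ε := by
          rw [hl, Real.log_inv, neg_neg, Real.exp_log hε.1]

/-- for `α ∈ (0,1]` there is `c > 0` (depending only on `α`) such that for
all `d ≥ 1`, `m ≥ 2` and `f ∈ F_d^α`, `‖f − P_{[-m,m]^d} f‖_∞ ≤ (c log m)^d m^{-α}`;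
consequently there is `c' > 0` (depending only on `α`) with
`log N^∞(ε, F_d^α) ≤ c' d² log²(d) log(ε⁻¹)` for all `d ≥ 2`, `ε ∈ (0,1/2)`. -/
theorem statement9 :
    ∀ α : ℝ, α ∈ Set.Ioc (0 : ℝ) 1 →
      (∃ c : ℝ, 0 < c ∧
        ∀ (d m : ℕ), 1 ≤ d → 2 ≤ m → ∀ f ∈ FdAlpha α d, ∀ x : Fin d → ℝ,
          ‖f x - ∑ k ∈ boxZ d m, fCoeff d f k * eK d k x‖
            ≤ (c * Real.log m) ^ d * (m : ℝ) ^ (-α)) ∧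
      (∃ c' : ℝ, 0 < c' ∧
        ∀ (d : ℕ) (ε : ℝ), 2 ≤ d → ε ∈ Set.Ioo (0 : ℝ) (1/2) →
          ∃ Λ : Finset (Fin d → ℤ),
            Real.log Λ.card ≤ c' * d ^ 2 * Real.log d ^ 2 * Real.log ε⁻¹ ∧
            ∀ f ∈ FdAlpha α d, ∀ x : Fin d → ℝ,
              ‖f x - ∑ k ∈ Λ, fCoeff d f k * eK d k x‖ ≤ ε) := by
  intro α hα
  exact ⟨⟨90, by norm_num, fun d m hd hm f hf x =>
    main_bound α hα.1 hα.2 d m hd hm f hf x⟩, second_part α hα.1 hα.2⟩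
end
end
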